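/- Let ρ be a density matrix on H_a ⊗ H_A ⊗ H_B with reduced states ρ_{aAB} = ρ and ρ_{aA} = Tr_B ρ, and assume ρ_{aA} is positive definite. Let H be a Hermitian operator on H_A ⊗ H_B, acting on the full space as I_a ⊗ H. Then i Tr((I_a ⊗ H)[ρ_{aAB}, ln(ρ_{aA} ⊗ (I_B/d_B))]) ≤ 8 ‖H‖ ln d_B, where d_B = dim H_B. -/

import Mathlib

open Matrix Kronecker
open scoped ComplexOrder

/-- Operator norm of a complex matrix: the norm of the induced operator on Euclidean space. -/
noncomputable def opNorm {n : Type*} [Fintype n] [DecidableEq n]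
    (A : Matrix n n ℂ) : ℝ :=
  ‖Matrix.toEuclideanCLM (𝕜 := ℂ) A‖

/-- Matrix logarithm of a Hermitian matrix, defined by functional calculus via the spectral
decomposition (and as `0` on non-Hermitian matrices).  Since `Real.log 0 = 0`, on a positive
semidefinite matrix this is the logarithm on the support. -/
noncomputable def mlog {n : Type*} [Fintype n] [DecidableEq n]
    (A : Matrix n n ℂ) : Matrix n n ℂ :=
  if hA : A.IsHermitian then
    (hA.eigenvectorUnitary : Matrix n n ℂ) *
      Matrix.diagonal (fun i => (Real.log (hA.eigenvalues i) : ℂ)) *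
      (star (hA.eigenvectorUnitary : Matrix n n ℂ))
  else 0

/-- The Lindblad generator `𝓛(ρ) = -i[H,ρ] + Σ_α (L_α ρ L_α† - ½ L_α† L_α ρ - ½ ρ L_α† L_α)`. -/
noncomputable def lindblad {n : Type*} [Fintype n] {ι : Type*} [Fintype ι]
    (H : Matrix n n ℂ) (L : ι → Matrix n n ℂ) (ρ : Matrix n n ℂ) : Matrix n n ℂ :=
  -(Complex.I) • (H * ρ - ρ * H) +
    ∑ α, (L α * ρ * (L α)ᴴ - (2:ℂ)⁻¹ • ((L α)ᴴ * (L α) * ρ) - (2:ℂ)⁻¹ • (ρ * (L α)ᴴ * (L α)))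

/-- Partial trace over the second tensor factor. -/
noncomputable def ptraceR {m p : Type*} [Fintype p]
    (ρ : Matrix (m × p) (m × p) ℂ) : Matrix m m ℂ :=
  Matrix.of fun i j => ∑ b, ρ (i, b) (j, b)

/-- Partial trace over the first tensor factor. -/
noncomputable def ptraceL {m p : Type*} [Fintype m]
    (ρ : Matrix (m × p) (m × p) ℂ) : Matrix p p ℂ :=
  Matrix.of fun i j => ∑ a, ρ (a, i) (a, j)

/-- A density matrix: positive semidefinite with trace one. -/
noncomputable def IsDensityMatrix {n : Type*} [Fintype n] (ρ : Matrix n n ℂ) : Prop :=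
  ρ.PosSemidef ∧ ρ.trace = 1

/-- Von Neumann entropy `S(ρ) = -Tr(ρ ln ρ) = -Σ_i λ_i ln λ_i` (with `0 ln 0 = 0`). -/
noncomputable def vNEntropy {n : Type*} [Fintype n] [DecidableEq n]
    (ρ : Matrix n n ℂ) : ℝ :=
  if h : ρ.IsHermitian then -∑ i, (h.eigenvalues i) * Real.log (h.eigenvalues i) else 0

/-- An operator `M` on `H_A ⊗ H_B`, extended to `(H_a ⊗ H_A) ⊗ H_B` as `I_a ⊗ M`. -/
noncomputable def liftA {da dA dB : ℕ}
    (M : Matrix (Fin dA × Fin dB) (Fin dA × Fin dB) ℂ) :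
    Matrix ((Fin da × Fin dA) × Fin dB) ((Fin da × Fin dA) × Fin dB) ℂ :=
  Matrix.of fun p q => if p.1.1 = q.1.1 then M (p.1.2, p.2) (q.1.2, q.2) else 0

/-!
Write `σ = ρ_{aA} ⊗ 1/d`, where `d = d_B`. Averaging over matrix units gives `ρ ≤ d ρ_{aA} ⊗ 1`,
that is `ρ ≤ d² σ`, and rescaling `σ` does not change the commutator with `ln σ`, so we may use
`τ = σ/2` and compare `ln τ` with the logarithm of `M = ρ + τ`.

* `0 ≤ ln M - ln τ ≤ ln(2d² + 1)` by operator monotonicity of the logarithm, so replacing `ln τ` by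
  `ln M` costs at most `‖G‖ ln(2d² + 1)`.
* Since `ρ ≤ M`, we have `ρ = √M C √M` with `‖C‖ ≤ 1`. In an eigenbasis of `M` the entries of
  `[ρ, ln M]` are `√(mᵢ mⱼ) (ln mⱼ - ln mᵢ) Cᵢⱼ`, which the inequality between the geometric and
  the logarithmic mean bounds by `|mᵢ - mⱼ| |Cᵢⱼ|`; by Cauchy–Schwarz this part costs at most
  `2 ‖G‖ tr M = 3 ‖G‖`.

For `d ≥ 2` the sum `3 + ln(2d² + 1)` is at most `8 ln d`, and for `d = 1` the commutator vanishes.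
-/

section Real

lemma sqrt_mul_sqrt_mul_abs_log_sub_log_le {a b : ℝ} (ha : 0 < a) (hb : 0 < b) :
    √a * √b * |Real.log b - Real.log a| ≤ |b - a| := by
  set x := √a
  set y := √b
  have hx : 0 < x := Real.sqrt_pos.2 ha
  have hy : 0 < y := Real.sqrt_pos.2 hb
  have hax : a = x ^ 2 := (Real.sq_sqrt ha.le).symm
  have hby : b = y ^ 2 := (Real.sq_sqrt hb.le).symm
  have hlog : Real.log b - Real.log a = 2 * Real.log (y / x) := by
    rw [hax, hby, Real.log_pow, Real.log_pow, Real.log_div hy.ne' hx.ne']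
    push_cast; ring
  have hsinh : b - a = x * y * (2 * Real.sinh (Real.log (y / x))) := by
    rw [Real.sinh_log (div_pos hy hx), hax, hby]
    field_simp
  rw [hlog, hsinh, abs_mul, abs_mul (x * y), abs_of_pos (mul_pos hx hy), abs_mul, Real.abs_sinh]
  gcongr
  exact Real.self_le_sinh_iff.2 (abs_nonneg _)

lemma log_two_mul_sq_add_one_add_three_le {d : ℝ} (hd : 2 ≤ d) :
    Real.log (2 * d ^ 2 + 1) + 3 ≤ 8 * Real.log d := by
  have hpow : (2 * d ^ 2 + 1) ^ 2 ≤ d ^ 7 := by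
    calc (2 * d ^ 2 + 1) ^ 2 ≤ (9 / 4 * d ^ 2) ^ 2 := by gcongr; nlinarith
      _ ≤ d ^ 4 * 2 ^ 3 := by nlinarith [pow_pos (two_pos.trans_le hd) 4]
      _ ≤ d ^ 4 * d ^ 3 := by gcongr
      _ = d ^ 7 := by ring
  have hlog : 2 * Real.log (2 * d ^ 2 + 1) ≤ 7 * Real.log d := by
    simpa only [Real.log_pow, Nat.cast_ofNat] using Real.log_le_log (by positivity) hpow
  have hlog_two : Real.log 2 ≤ Real.log d := Real.log_le_log two_pos hd
  linarith [Real.log_two_gt_d9]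

end Real

section CStarAlgebra

lemma sum_mul_mul_star_sum_le {A ι : Type*} [NonUnitalCStarAlgebra A] [PartialOrder A]
    [StarOrderedRing A] (s : Finset ι) (x : ι → A) {a : A} (ha : 0 ≤ a) :
    (∑ i ∈ s, x i) * a * star (∑ i ∈ s, x i) ≤ (s.card : ℝ) • ∑ i ∈ s, x i * a * star (x i) := by
  have hsum : ∑ i ∈ s, ∑ j ∈ s, (x i - x j) * a * star (x i - x j) =
      (2 : ℝ) • ((s.card : ℝ) • ∑ i ∈ s, x i * a * star (x i) -
        (∑ i ∈ s, x i) * a * star (∑ i ∈ s, x i)) := by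
    simp only [star_sub, star_sum, mul_sub, sub_mul, Finset.sum_sub_distrib, Finset.sum_const,
      ← Finset.smul_sum, ← Finset.sum_mul, ← Finset.mul_sum, Nat.cast_smul_eq_nsmul, two_smul]
    abel
  have hnonneg : 0 ≤ ∑ i ∈ s, ∑ j ∈ s, (x i - x j) * a * star (x i - x j) :=
    Finset.sum_nonneg fun i _ ↦ Finset.sum_nonneg fun j _ ↦ star_right_conjugate_nonneg ha _
  rw [hsum] at hnonneg
  exact sub_nonneg.1 (nonneg_of_smul_nonneg_of_pos_left hnonneg two_pos)

variable {A : Type*} [CStarAlgebra A] [PartialOrder A] [StarOrderedRing A]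

lemma norm_lie_le_mul_norm_of_nonneg_of_le {a : A} (ha : 0 ≤ a) {c : ℝ} (hc : 0 ≤ c)
    (hac : a ≤ algebraMap ℝ A c) (b : A) : ‖⁅a, b⁆‖ ≤ c * ‖b‖ := by
  have hcentered : ‖a - algebraMap ℝ A (c / 2)‖ ≤ c / 2 := by
    have hcfc : a - algebraMap ℝ A (c / 2) = cfc (fun x : ℝ ↦ x - c / 2) a := by
      rw [cfc_sub (fun x : ℝ ↦ x) (fun _ ↦ c / 2) a, cfc_id' ℝ a, cfc_const (c / 2) a]
    rw [hcfc]
    refine norm_cfc_le (by positivity) fun x hx ↦ abs_le.2 ⟨?_, ?_⟩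
    · linarith [spectrum_nonneg_of_nonneg ha hx]
    · linarith [(le_algebraMap_iff_spectrum_le (R := ℝ) (a := a)).1 hac x hx]
  set z := a - algebraMap ℝ A (c / 2) with hz
  calc ‖⁅a, b⁆‖ = ‖z * b - b * z‖ := by
        rw [Ring.lie_def, hz, sub_mul, mul_sub, Algebra.commutes, sub_sub_sub_cancel_right]
    _ ≤ ‖z‖ * ‖b‖ + ‖b‖ * ‖z‖ :=
        (norm_sub_le _ _).trans (add_le_add (norm_mul_le _ _) (norm_mul_le _ _))
    _ ≤ c / 2 * ‖b‖ + ‖b‖ * (c / 2) := by gcongr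
    _ = c * ‖b‖ := by ring

lemma exists_norm_le_one_eq_sqrt_mul_mul_sqrt {a b : A} (ha : 0 ≤ a) (hb : IsStrictlyPositive b)
    (hab : a ≤ b) : ∃ c : A, ‖c‖ ≤ 1 ∧ a = CFC.sqrt b * c * CFC.sqrt b := by
  set t := b ^ (-(1 / 2) : ℝ)
  have hsqrt_mul : CFC.sqrt b * t = 1 := by
    rw [CFC.sqrt_eq_rpow (a := b)]
    exact CFC.rpow_mul_rpow_neg _ hb
  have hmul_sqrt : t * CFC.sqrt b = 1 := by
    rw [CFC.sqrt_eq_rpow (a := b)]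
    exact CFC.rpow_neg_mul_rpow _ hb
  refine ⟨t * a * t, ?_, ?_⟩
  · have hle : t * a * t ≤ 1 :=
      (conjugate_le_conjugate_of_nonneg hab CFC.rpow_nonneg).trans_eq
        (CFC.conjugate_rpow_neg_one_half b)
    exact (CStarAlgebra.norm_le_one_iff_of_nonneg _
      (conjugate_nonneg_of_nonneg ha CFC.rpow_nonneg)).2 hle
  · calc a = (CFC.sqrt b * t) * a * (t * CFC.sqrt b) := by
          rw [hsqrt_mul, hmul_sqrt, one_mul, mul_one]
      _ = CFC.sqrt b * (t * a * t) * CFC.sqrt b := by simp only [mul_assoc]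

lemma log_add_sub_log_nonneg {a b : A} (ha : 0 ≤ a) (hb : IsStrictlyPositive b) :
    0 ≤ CFC.log (a + b) - CFC.log b :=
  sub_nonneg.2 (CFC.log_le_log (le_add_of_nonneg_left ha) hb)

lemma log_add_sub_log_le {a b : A} (ha : 0 ≤ a) (hb : IsStrictlyPositive b) {K : ℝ} (hK : 0 ≤ K)
    (hab : a ≤ K • b) :
    CFC.log (a + b) - CFC.log b ≤ algebraMap ℝ A (Real.log (K + 1)) := by
  rw [sub_le_iff_le_add, ← CFC.log_smul' b (by positivity) hb, add_smul, one_smul]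
  have : IsStrictlyPositive (a + b) := hb.nonneg_add ha
  exact CFC.log_le_log (add_le_add_left hab b)

lemma lie_log_smul {b : A} (hb : IsStrictlyPositive b) {r : ℝ} (hr : 0 < r) (a : A) :
    ⁅a, CFC.log (r • b)⁆ = ⁅a, CFC.log b⁆ := by
  rw [CFC.log_smul' b hr hb, Ring.lie_def, Ring.lie_def, mul_add, add_mul, Algebra.commutes,
    add_sub_add_left_eq_sub]

end CStarAlgebra

section Matrix

lemma trace_mul_lie {n R : Type*} [Fintype n] [CommRing R] (G A Y : Matrix n n R) :
    (G * ⁅A, Y⁆).trace = (A * ⁅Y, G⁆).trace := by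
  simp only [Ring.lie_def, mul_sub, trace_sub, ← mul_assoc]
  rw [trace_mul_cycle G Y, trace_mul_cycle A Y]

open scoped MatrixOrder Matrix.Norms.L2Operator

section EntryNorm

variable {m n 𝕜 : Type*} [Fintype m] [Fintype n] [DecidableEq n] [RCLike 𝕜]

lemma sum_norm_sq_col_le (Z : Matrix m n 𝕜) (j : n) : ∑ i, ‖Z i j‖ ^ 2 ≤ ‖Z‖ ^ 2 := by
  have hmulVec := l2_opNorm_mulVec Z (EuclideanSpace.single j 1)
  rw [PiLp.norm_single, norm_one, mul_one] at hmulVec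
  simpa [EuclideanSpace.norm_sq_eq] using pow_le_pow_left₀ (norm_nonneg _) hmulVec 2

lemma norm_apply_le_l2_opNorm (Z : Matrix m n 𝕜) (i : m) (j : n) : ‖Z i j‖ ≤ ‖Z‖ :=
  le_of_sq_le_sq ((Finset.single_le_sum (f := fun i ↦ ‖Z i j‖ ^ 2) (fun _ _ ↦ sq_nonneg _)
    (Finset.mem_univ i)).trans (sum_norm_sq_col_le Z j)) (norm_nonneg Z)

lemma sum_norm_sq_row_le (Z : Matrix m n 𝕜) (i : m) : ∑ j, ‖Z i j‖ ^ 2 ≤ ‖Z‖ ^ 2 := by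
  classical
  simpa only [l2_opNorm_conjTranspose, conjTranspose_apply, norm_star] using
    sum_norm_sq_col_le Zᴴ i

lemma sum_norm_mul_norm_le [DecidableEq m] (Z : Matrix m n 𝕜) (W : Matrix n m 𝕜) (i : m) :
    ∑ j, ‖Z i j‖ * ‖W j i‖ ≤ ‖Z‖ * ‖W‖ := by
  calc ∑ j, ‖Z i j‖ * ‖W j i‖ ≤ √(∑ j, ‖Z i j‖ ^ 2) * √(∑ j, ‖W j i‖ ^ 2) :=
        Real.sum_mul_le_sqrt_mul_sqrt _ _ _
    _ ≤ ‖Z‖ * ‖W‖ := by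
        gcongr
        · exact Real.sqrt_le_iff.2 ⟨norm_nonneg Z, sum_norm_sq_row_le Z i⟩
        · exact Real.sqrt_le_iff.2 ⟨norm_nonneg W, sum_norm_sq_col_le W i⟩

end EntryNorm

variable {n : Type*} [Fintype n] [DecidableEq n]

lemma mlog_eq_log {A : Matrix n n ℂ} (hA : A.IsHermitian) : mlog A = CFC.log A := by
  rw [CFC.log, hA.cfc_eq, mlog, dif_pos hA, IsHermitian.cfc, Unitary.conjStarAlgAut_apply]
  rfl

/-- The change of basis `X ↦ Uᴴ X U` to an orthonormal eigenbasis of a Hermitian matrix, as a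
star-algebra automorphism; it turns every function of that matrix into a diagonal one. -/
noncomputable def eigenbasisConj {A : Matrix n n ℂ} (hA : A.IsHermitian) :
    Matrix n n ℂ ≃⋆ₐ[ℂ] Matrix n n ℂ :=
  Unitary.conjStarAlgAut ℂ _ (star hA.eigenvectorUnitary)

lemma eigenbasisConj_cfc {A : Matrix n n ℂ} (hA : A.IsHermitian) (f : ℝ → ℝ) :
    eigenbasisConj hA (cfc f A) = diagonal fun i ↦ (f (hA.eigenvalues i) : ℂ) := by
  rw [hA.cfc_eq, IsHermitian.cfc, eigenbasisConj, ← Unitary.conjStarAlgAut_symm,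
    StarAlgEquiv.symm_apply_apply]
  rfl

lemma eigenbasisConj_self {A : Matrix n n ℂ} (hA : A.IsHermitian) :
    eigenbasisConj hA A = diagonal fun i ↦ (hA.eigenvalues i : ℂ) := by
  simpa only [cfc_id' ℝ A hA.isSelfAdjoint] using eigenbasisConj_cfc hA fun x ↦ x

lemma trace_eigenbasisConj {A : Matrix n n ℂ} (hA : A.IsHermitian) (X : Matrix n n ℂ) :
    (eigenbasisConj hA X).trace = X.trace := by
  rw [eigenbasisConj, Unitary.conjStarAlgAut_star_apply, trace_mul_cycle,
    Unitary.mul_star_self_of_mem hA.eigenvectorUnitary.2, one_mul]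

lemma trace_re_eq_sum_eigenvalues {A : Matrix n n ℂ} (hA : A.IsHermitian) :
    A.trace.re = ∑ i, hA.eigenvalues i := by
  rw [hA.trace_eq_sum_eigenvalues, Complex.re_sum]
  rfl

lemma norm_trace_mul_le {A : Matrix n n ℂ} (hA : A.PosSemidef) (Z : Matrix n n ℂ) :
    ‖(A * Z).trace‖ ≤ ‖Z‖ * A.trace.re := by
  set φ := eigenbasisConj hA.1
  have htrace : (A * Z).trace = ∑ i, (hA.1.eigenvalues i : ℂ) * φ Z i i := by
    rw [← trace_eigenbasisConj hA.1, map_mul, eigenbasisConj_self]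
    simp only [trace, diag_apply, diagonal_mul, φ]
  rw [htrace, trace_re_eq_sum_eigenvalues hA.1, Finset.mul_sum]
  refine (norm_sum_le _ _).trans (Finset.sum_le_sum fun i _ ↦ ?_)
  rw [norm_mul, Complex.norm_of_nonneg (hA.eigenvalues_nonneg i), mul_comm ‖Z‖]
  exact mul_le_mul_of_nonneg_left
    ((norm_apply_le_l2_opNorm _ i i).trans_eq (StarAlgEquiv.norm_map φ Z)) (hA.eigenvalues_nonneg i)

lemma norm_trace_mul_lie_diagonal_log_le {m : n → ℝ} (hm : ∀ i, 0 < m i) (G C : Matrix n n ℂ) :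
    ‖(G * ⁅diagonal (fun i ↦ (√(m i) : ℂ)) * C * diagonal (fun i ↦ (√(m i) : ℂ)),
      diagonal fun i ↦ (Real.log (m i) : ℂ)⁆).trace‖ ≤ 2 * ‖G‖ * ‖C‖ * ∑ i, m i := by
  have hterm (i j : n) :
      ‖G i j * (√(m j) * C j i * √(m i) * Real.log (m i) -
        Real.log (m j) * (√(m j) * C j i * √(m i)))‖ ≤ (m i + m j) * (‖G i j‖ * ‖C j i‖) := by
    have hentry : G i j * (√(m j) * C j i * √(m i) * Real.log (m i) -
        Real.log (m j) * (√(m j) * C j i * √(m i))) =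
        ((√(m j) * √(m i) * (Real.log (m i) - Real.log (m j)) : ℝ) : ℂ) * (G i j * C j i) := by
      push_cast; ring
    have hdiff : |m i - m j| ≤ m i + m j :=
      abs_sub_le_iff.2 ⟨by linarith [hm j], by linarith [hm i]⟩
    rw [hentry, norm_mul, norm_mul (G i j), Complex.norm_real, Real.norm_eq_abs, abs_mul,
      abs_of_nonneg (by positivity : 0 ≤ √(m j) * √(m i))]
    gcongr
    exact (sqrt_mul_sqrt_mul_abs_log_sub_log_le (hm j) (hm i)).trans hdiff
  calc _ ≤ ∑ i, ∑ j, (m i + m j) * (‖G i j‖ * ‖C j i‖) := by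
        rw [Ring.lie_def, trace]
        simp only [diag_apply, mul_apply (M := G), Matrix.sub_apply, diagonal_mul, mul_diagonal]
        exact norm_sum_le_of_le _ fun i _ ↦ norm_sum_le_of_le _ fun j _ ↦ hterm i j
    _ = (∑ i, m i * ∑ j, ‖G i j‖ * ‖C j i‖) + ∑ j, m j * ∑ i, ‖C j i‖ * ‖G i j‖ := by
        simp only [add_mul, Finset.sum_add_distrib, Finset.mul_sum, mul_comm ‖C _ _‖]
        rw [Finset.sum_comm (f := fun i j ↦ m j * (‖G i j‖ * ‖C j i‖))]
    _ ≤ (∑ i, m i * (‖G‖ * ‖C‖)) + ∑ j, m j * (‖C‖ * ‖G‖) := by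
        gcongr with i _ j _
        · exact (hm i).le
        · exact sum_norm_mul_norm_le G C i
        · exact (hm j).le
        · exact sum_norm_mul_norm_le C G j
    _ = 2 * ‖G‖ * ‖C‖ * ∑ i, m i := by
        rw [← Finset.sum_mul, ← Finset.sum_mul]; ring

lemma norm_trace_mul_lie_sqrt_mul_mul_sqrt_log_le {M : Matrix n n ℂ} (hM : M.PosDef)
    (G C : Matrix n n ℂ) :
    ‖(G * ⁅CFC.sqrt M * C * CFC.sqrt M, CFC.log M⁆).trace‖ ≤ 2 * ‖G‖ * ‖C‖ * M.trace.re := by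
  set φ := eigenbasisConj hM.1
  have hsqrt : φ (CFC.sqrt M) = diagonal fun i ↦ (√(hM.1.eigenvalues i) : ℂ) := by
    rw [CFC.sqrt_eq_real_sqrt M hM.posSemidef.nonneg, cfcₙ_eq_cfc]
    exact eigenbasisConj_cfc hM.1 _
  have hlog : φ (CFC.log M) = diagonal fun i ↦ (Real.log (hM.1.eigenvalues i) : ℂ) :=
    eigenbasisConj_cfc hM.1 _
  have hlie : φ (G * ⁅CFC.sqrt M * C * CFC.sqrt M, CFC.log M⁆) =
      φ G * ⁅φ (CFC.sqrt M) * φ C * φ (CFC.sqrt M), φ (CFC.log M)⁆ := by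
    simp only [Ring.lie_def, map_mul, map_sub]
  rw [← trace_eigenbasisConj hM.1, hlie, hsqrt, hlog, trace_re_eq_sum_eigenvalues hM.1,
    ← StarAlgEquiv.norm_map φ G, ← StarAlgEquiv.norm_map φ C]
  exact norm_trace_mul_lie_diagonal_log_le hM.eigenvalues_pos (φ G) (φ C)

lemma norm_trace_mul_lie_log_le_of_le {A M : Matrix n n ℂ} (hA : A.PosSemidef) (hM : M.PosDef)
    (hAM : A ≤ M) (G : Matrix n n ℂ) :
    ‖(G * ⁅A, CFC.log M⁆).trace‖ ≤ 2 * ‖G‖ * M.trace.re := by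
  obtain ⟨C, hC, rfl⟩ := exists_norm_le_one_eq_sqrt_mul_mul_sqrt hA.nonneg
    (isStrictlyPositive_iff_posDef.2 hM) hAM
  have htrace : 0 ≤ M.trace.re := (Complex.nonneg_iff.1 hM.posSemidef.trace_nonneg).1
  calc _ ≤ 2 * ‖G‖ * ‖C‖ * M.trace.re := norm_trace_mul_lie_sqrt_mul_mul_sqrt_log_le hM G C
    _ ≤ 2 * ‖G‖ * 1 * M.trace.re := by gcongr
    _ = 2 * ‖G‖ * M.trace.re := by rw [mul_one]

lemma norm_trace_mul_lie_log_le_of_le_smul {A T : Matrix n n ℂ} (hA : A.PosSemidef)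
    (hT : T.PosDef) {K : ℝ} (hK : 0 ≤ K) (hAT : A ≤ K • T) (G : Matrix n n ℂ) :
    ‖(G * ⁅A, CFC.log T⁆).trace‖ ≤
      ‖G‖ * (2 * (A + T).trace.re + Real.log (K + 1) * A.trace.re) := by
  have hT' : IsStrictlyPositive T := isStrictlyPositive_iff_posDef.2 hT
  set D := CFC.log (A + T) - CFC.log T
  have hsplit : (G * ⁅A, CFC.log T⁆).trace =
      (G * ⁅A, CFC.log (A + T)⁆).trace - (A * ⁅D, G⁆).trace := by
    rw [← trace_mul_lie G A D, ← trace_sub, ← mul_sub]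
    congr 2
    simp only [Ring.lie_def, D]
    noncomm_ring
  have hD : ‖⁅D, G⁆‖ ≤ Real.log (K + 1) * ‖G‖ :=
    norm_lie_le_mul_norm_of_nonneg_of_le (log_add_sub_log_nonneg hA.nonneg hT')
      (Real.log_nonneg (by linarith)) (log_add_sub_log_le hA.nonneg hT' hK hAT) G
  have htrace : 0 ≤ A.trace.re := (Complex.nonneg_iff.1 hA.trace_nonneg).1
  calc ‖(G * ⁅A, CFC.log T⁆).trace‖
      ≤ ‖(G * ⁅A, CFC.log (A + T)⁆).trace‖ + ‖(A * ⁅D, G⁆).trace‖ := hsplit ▸ norm_sub_le _ _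
    _ ≤ 2 * ‖G‖ * (A + T).trace.re + ‖⁅D, G⁆‖ * A.trace.re :=
        add_le_add (norm_trace_mul_lie_log_le_of_le hA (PosDef.posSemidef_add hA hT)
          (le_add_of_nonneg_right hT.posSemidef.nonneg) G) (norm_trace_mul_le hA _)
    _ ≤ 2 * ‖G‖ * (A + T).trace.re + Real.log (K + 1) * ‖G‖ * A.trace.re := by gcongr
    _ = ‖G‖ * (2 * (A + T).trace.re + Real.log (K + 1) * A.trace.re) := by ring

lemma norm_trace_mul_lie_log_le_of_le_smul_of_trace_eq {A S : Matrix n n ℂ} (hA : A.PosSemidef)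
    (hS : S.PosDef) {c : ℝ} (hc : 0 ≤ c) (hAS : A ≤ c • S) (htrace : S.trace = A.trace)
    (G : Matrix n n ℂ) :
    ‖(G * ⁅A, CFC.log S⁆).trace‖ ≤ ‖G‖ * A.trace.re * (Real.log (2 * c + 1) + 3) := by
  -- Multiplying `S` by `1 / 2` does not affect the commutator but improves the constant.
  have hhalf : (0 : ℝ) < 1 / 2 := by norm_num
  have hle : A ≤ (2 * c) • ((1 / 2 : ℝ) • S) := by
    rwa [smul_smul, mul_one_div, mul_div_cancel_left₀ c two_ne_zero]
  have htrace_re : (A + (1 / 2 : ℝ) • S).trace.re = 3 / 2 * A.trace.re := by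
    rw [trace_add, trace_smul, htrace, Complex.add_re, Complex.smul_re, smul_eq_mul]
    ring
  calc ‖(G * ⁅A, CFC.log S⁆).trace‖ = ‖(G * ⁅A, CFC.log ((1 / 2 : ℝ) • S)⁆).trace‖ := by
        rw [lie_log_smul (isStrictlyPositive_iff_posDef.2 hS) hhalf]
    _ ≤ ‖G‖ * (2 * (A + (1 / 2 : ℝ) • S).trace.re + Real.log (2 * c + 1) * A.trace.re) :=
        norm_trace_mul_lie_log_le_of_le_smul hA (hS.smul hhalf) (by positivity) hle G
    _ = ‖G‖ * A.trace.re * (Real.log (2 * c + 1) + 3) := by rw [htrace_re]; ring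

lemma lie_log_self {A : Matrix n n ℂ} (hA : A.IsHermitian) : ⁅A, CFC.log A⁆ = 0 :=
  (hA.isSelfAdjoint.commute_cfc (Commute.refl A) Real.log).symm.lie_eq

end Matrix

section PartialTrace

variable {m p : Type*} [Fintype p]

lemma trace_ptraceR [Fintype m] (ρ : Matrix (m × p) (m × p) ℂ) :
    (ptraceR ρ).trace = ρ.trace := by
  simp only [ptraceR, trace, diag_apply, of_apply, Fintype.sum_prod_type]

variable [DecidableEq p]

lemma ptraceR_kronecker_one_eq_sum [Fintype m] [DecidableEq m] (ρ : Matrix (m × p) (m × p) ℂ) :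
    ptraceR ρ ⊗ₖ (1 : Matrix p p ℂ) =
      ∑ b, ∑ c, (1 ⊗ₖ single b c 1) * ρ * ((1 : Matrix m m ℂ) ⊗ₖ single b c (1 : ℂ))ᴴ := by
  ext ⟨i, b⟩ ⟨j, c⟩
  obtain rfl | hbc := eq_or_ne b c
  · simp [ptraceR, mul_apply, Fintype.sum_prod_type, Matrix.sum_apply, one_apply, single_apply,
      conjTranspose_kronecker, ite_and]
  · simp [mul_apply, Fintype.sum_prod_type, Matrix.sum_apply, one_apply, single_apply, ite_and,
      hbc]

open scoped MatrixOrder Matrix.Norms.L2Operator in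
lemma le_card_smul_ptraceR_kronecker_one [Finite m] {ρ : Matrix (m × p) (m × p) ℂ}
    (hρ : ρ.PosSemidef) : ρ ≤ (Fintype.card p : ℝ) • (ptraceR ρ ⊗ₖ (1 : Matrix p p ℂ)) := by
  classical
  have := Fintype.ofFinite m
  set P : p → p → Matrix (m × p) (m × p) ℂ := fun b c ↦ 1 ⊗ₖ single b c 1
  have hsum : ∑ b, P b b = 1 := by
    rw [← one_kronecker_one, ← sum_single_one (m := p)]
    exact (map_sum (kroneckerBilinear (R := ℂ) (1 : Matrix m m ℂ))
      (fun b : p ↦ single b b (1 : ℂ)) Finset.univ).symm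
  calc ρ = (∑ b, P b b) * ρ * star (∑ b, P b b) := by rw [hsum, star_one, one_mul, mul_one]
    _ ≤ (Fintype.card p : ℝ) • ∑ b, P b b * ρ * star (P b b) :=
        sum_mul_mul_star_sum_le Finset.univ _ hρ.nonneg
    _ ≤ (Fintype.card p : ℝ) • ∑ b, ∑ c, P b c * ρ * star (P b c) := by
        refine smul_le_smul_of_nonneg_left (Finset.sum_le_sum fun b _ ↦ ?_) (Nat.cast_nonneg _)
        exact Finset.single_le_sum (f := fun c ↦ P b c * ρ * star (P b c))
          (fun c _ ↦ star_right_conjugate_nonneg hρ.nonneg _) (Finset.mem_univ b)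
    _ = (Fintype.card p : ℝ) • (ptraceR ρ ⊗ₖ (1 : Matrix p p ℂ)) := by
        rw [ptraceR_kronecker_one_eq_sum]; rfl

/-- The maximally mixed state `1 / d`, `d = card p`. -/
noncomputable def maxMixed (p : Type*) [Fintype p] [DecidableEq p] : Matrix p p ℂ :=
  (Fintype.card p : ℂ)⁻¹ • 1

lemma kronecker_maxMixed (X : Matrix m m ℂ) :
    X ⊗ₖ maxMixed p = (Fintype.card p : ℝ)⁻¹ • (X ⊗ₖ (1 : Matrix p p ℂ)) := by
  rw [maxMixed, kronecker_smul, ← Complex.coe_smul, Complex.ofReal_inv, Complex.ofReal_natCast]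

lemma ptraceR_kronecker_maxMixed_of_subsingleton [Subsingleton p]
    (ρ : Matrix (m × p) (m × p) ℂ) : ptraceR ρ ⊗ₖ maxMixed p = ρ := by
  ext ⟨i, b⟩ ⟨j, c⟩
  have := Unique.mk' p (h₁ := ⟨b⟩)
  simp [ptraceR, maxMixed, Subsingleton.elim b default, Subsingleton.elim c default]

variable [Nonempty p]

lemma trace_maxMixed : (maxMixed p).trace = 1 := by
  rw [maxMixed, trace_smul, trace_one, smul_eq_mul, inv_mul_cancel₀]
  exact Nat.cast_ne_zero.2 Fintype.card_ne_zero

lemma posDef_maxMixed : (maxMixed p).PosDef :=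
  PosDef.one.smul (inv_pos.2 (Nat.cast_pos.2 Fintype.card_pos))

open scoped MatrixOrder in
lemma le_card_sq_smul_ptraceR_kronecker_maxMixed [Finite m] {ρ : Matrix (m × p) (m × p) ℂ}
    (hρ : ρ.PosSemidef) : ρ ≤ ((Fintype.card p : ℝ) ^ 2) • (ptraceR ρ ⊗ₖ maxMixed p) := by
  rw [kronecker_maxMixed, smul_smul, sq, mul_assoc, mul_inv_cancel₀, mul_one]
  · exact le_card_smul_ptraceR_kronecker_one hρ
  · exact Nat.cast_ne_zero.2 Fintype.card_ne_zero

end PartialTrace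

/-- The ampliation `X ↦ 1 ⊗ X` of the matrices on one tensor factor, as a star homomorphism. -/
noncomputable def ampliation {k l n : Type*} [Fintype k] [Fintype l] [Fintype n] [DecidableEq l]
    (e : k ≃ l × n) : Matrix n n ℂ →⋆ₙₐ[ℂ] Matrix k k ℂ where
  toFun X := ((1 : Matrix l l ℂ) ⊗ₖ X).submatrix e e
  map_smul' c X := by rw [kronecker_smul, submatrix_smul]; rfl
  map_zero' := by rw [kronecker_zero, submatrix_zero]; rfl
  map_add' X Y := by rw [kronecker_add, submatrix_add]; rfl
  map_mul' X Y := by rw [submatrix_mul_equiv, ← mul_kronecker_mul, one_mul]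
  map_star' X := by
    rw [star_eq_conjTranspose, star_eq_conjTranspose, conjTranspose_submatrix,
      conjTranspose_kronecker, conjTranspose_one]

lemma opNorm_ampliation_le {k l n : Type*} [Fintype k] [Fintype l] [Fintype n] [DecidableEq l]
    [DecidableEq k] [DecidableEq n] (e : k ≃ l × n) (X : Matrix n n ℂ) :
    opNorm (ampliation e X) ≤ opNorm X := by
  open scoped Matrix.Norms.L2Operator in
  exact NonUnitalStarAlgHom.norm_apply_le (ampliation e) X

lemma liftA_eq_ampliation {da dA dB : ℕ} (M : Matrix (Fin dA × Fin dB) (Fin dA × Fin dB) ℂ) :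
    liftA (da := da) M = ampliation (Equiv.prodAssoc _ _ _) M := by
  ext p q
  simp [liftA, ampliation, one_apply]

open scoped MatrixOrder Matrix.Norms.L2Operator in
theorem trace_H_commutator_reduced_log_le_general {m p : Type*} [Fintype m] [DecidableEq m]
    [Fintype p] [DecidableEq p] {ρ : Matrix (m × p) (m × p) ℂ} (hρ : ρ.PosSemidef)
    (hred : (ptraceR ρ).PosDef) (G : Matrix (m × p) (m × p) ℂ) :
    ‖(G * ⁅ρ, mlog (ptraceR ρ ⊗ₖ maxMixed p)⁆).trace‖ ≤
      8 * opNorm G * ρ.trace.re * Real.log (Fintype.card p) := by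
  have htrace : 0 ≤ ρ.trace.re := (Complex.nonneg_iff.1 hρ.trace_nonneg).1
  change _ ≤ 8 * ‖G‖ * _ * _
  rcases subsingleton_or_nontrivial p with hp | hp
  · rw [ptraceR_kronecker_maxMixed_of_subsingleton, mlog_eq_log hρ.1, lie_log_self hρ.1, mul_zero,
      trace_zero, norm_zero]
    positivity
  · have hσ : (ptraceR ρ ⊗ₖ maxMixed p).PosDef := hred.kronecker posDef_maxMixed
    have hσ_trace : (ptraceR ρ ⊗ₖ maxMixed p).trace = ρ.trace := by
      rw [trace_kronecker, trace_maxMixed, mul_one, trace_ptraceR]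
    have hcard : (2 : ℝ) ≤ Fintype.card p := by exact_mod_cast Fintype.one_lt_card
    rw [mlog_eq_log hσ.1]
    calc _ ≤ ‖G‖ * ρ.trace.re * (Real.log (2 * (Fintype.card p : ℝ) ^ 2 + 1) + 3) :=
          norm_trace_mul_lie_log_le_of_le_smul_of_trace_eq hρ hσ (sq_nonneg _)
            (le_card_sq_smul_ptraceR_kronecker_maxMixed hρ) hσ_trace G
      _ ≤ ‖G‖ * ρ.trace.re * (8 * Real.log (Fintype.card p)) := by
          gcongr
          exact log_two_mul_sq_add_one_add_three_le hcard
      _ = 8 * ‖G‖ * ρ.trace.re * Real.log (Fintype.card p) := by ring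

/-- Hamiltonian part of the mutual-information rate:
`i Tr((I_a ⊗ H)[ρ_{aAB}, ln(ρ_{aA} ⊗ I_B/d_B)]) ≤ 8 ‖H‖ ln d_B`. -/
theorem trace_H_commutator_reduced_log_le {da dA dB : ℕ}
    (ρ : Matrix ((Fin da × Fin dA) × Fin dB) ((Fin da × Fin dA) × Fin dB) ℂ)
    (hρ : IsDensityMatrix ρ) (hred : (ptraceR ρ).PosDef)
    (H : Matrix (Fin dA × Fin dB) (Fin dA × Fin dB) ℂ) (hH : H.IsHermitian) :
    (Complex.I * ((liftA (da := da) H) *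
        (ρ * mlog (ptraceR ρ ⊗ₖ (((dB : ℂ))⁻¹ • (1 : Matrix (Fin dB) (Fin dB) ℂ)))
          - mlog (ptraceR ρ ⊗ₖ (((dB : ℂ))⁻¹ • (1 : Matrix (Fin dB) (Fin dB) ℂ))) * ρ)).trace).re ≤
      8 * opNorm H * Real.log dB := by
  have hlift : opNorm (liftA (da := da) H) ≤ opNorm H :=
    liftA_eq_ampliation (da := da) H ▸ opNorm_ampliation_le _ H
  have hbound := trace_H_commutator_reduced_log_le_general hρ.1 hred (liftA H)
  rw [maxMixed, Fintype.card_fin, Ring.lie_def, hρ.2, Complex.one_re, mul_one] at hbound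
  refine (Complex.re_le_norm _).trans ?_
  rw [norm_mul, Complex.norm_I, one_mul]
  exact hbound.trans (by gcongr)
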